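/- arXiv:1607.01231 — 6 statements merged into one kernel-verified Lean document; each statement's English description precedes it below -/
import Mathlib

section
/- Under the SQN setup, suppose in addition that the stepsizes satisfy α_k ≤ κ_lo/(L·κ_hi²) for all k ≥ 1. Then for every k ≥ 1, almost surely 𝔼[f(x_{k+1}) | ℱ_{k−1}] ≤ f(x_k) − (1/2)·α_k·κ_lo·‖∇f(x_k)‖² + (L·σ²·κ_hi²/(2·m_k))·α_k². -/
open MeasureTheory ProbabilityTheory Filter

lemma sqn_descent_ineq {E : Type*} [NormedAddCommGroup E] [InnerProductSpace ℝ E] [CompleteSpace E]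
    (f : E → ℝ) (L : ℝ) (hL : 0 < L) (hf : ContDiff ℝ 1 f)
    (hLip : LipschitzWith L.toNNReal (fun z => gradient f z)) (x d : E) :
    f (x + d) ≤ f x + inner ℝ (gradient f x) d + L / 2 * ‖d‖ ^ 2 := by
  have hdiff : Differentiable ℝ f := hf.differentiable (by norm_num)
  set φ : ℝ → ℝ := fun t => f (x + t • d) - t * inner ℝ (gradient f x) d - L / 2 * ‖d‖ ^ 2 * t ^ 2
    with hφ
  have hder : ∀ t : ℝ, HasDerivAt φ (inner ℝ (gradient f (x + t • d)) d
      - inner ℝ (gradient f x) d - L / 2 * ‖d‖ ^ 2 * (2 * t)) t := by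
    intro t
    have h1 : HasFDerivAt f (InnerProductSpace.toDual ℝ E (gradient f (x + t • d))) (x + t • d) :=
      (hdiff (x + t • d)).hasGradientAt.hasFDerivAt
    have h2 : HasDerivAt (fun t : ℝ => x + t • d) d t := by
      simpa using ((hasDerivAt_id t).smul_const d).const_add x
    have h3 := h1.comp_hasDerivAt t h2
    have h4 : HasDerivAt (fun t : ℝ => t * inner ℝ (gradient f x) d)
        (inner ℝ (gradient f x) d) t := by
      simpa using (hasDerivAt_id t).mul_const (inner ℝ (gradient f x) d)
    have h5 : HasDerivAt (fun t : ℝ => L / 2 * ‖d‖ ^ 2 * t ^ 2) (L / 2 * ‖d‖ ^ 2 * (2 * t)) t := by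
      simpa using (hasDerivAt_pow 2 t).const_mul (L / 2 * ‖d‖ ^ 2)
    have h6 := (h3.sub h4).sub h5
    exact h6
  have hanti : AntitoneOn φ (Set.Icc 0 1) := by
    apply antitoneOn_of_deriv_nonpos (convex_Icc 0 1)
    · exact fun t _ => (hder t).continuousAt.continuousWithinAt
    · exact fun t _ => (hder t).differentiableAt.differentiableWithinAt
    · intro t ht
      rw [interior_Icc] at ht
      rw [(hder t).deriv, ← inner_sub_left]
      have h1 := real_inner_le_norm (gradient f (x + t • d) - gradient f x) d
      have h2 := hLip.norm_sub_le (x + t • d) x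
      rw [Real.coe_toNNReal L hL.le, add_sub_cancel_left, norm_smul, Real.norm_eq_abs,
        abs_of_pos ht.1] at h2
      nlinarith [mul_le_mul_of_nonneg_right h2 (norm_nonneg d)]
  have h := hanti (show (0:ℝ) ∈ Set.Icc (0:ℝ) 1 by simp) (show (1:ℝ) ∈ Set.Icc (0:ℝ) 1 by simp)
    zero_le_one
  simp only [hφ, one_smul, zero_smul, add_zero, one_mul, zero_mul] at h
  linarith

lemma sqn_H_bounds {n : ℕ} (A : Matrix (Fin n) (Fin n) ℝ) (a b : ℝ) (ha : 0 < a) (hab : a ≤ b)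
    (h1 : (A - a • (1 : Matrix (Fin n) (Fin n) ℝ)).PosSemidef)
    (h2 : (b • (1 : Matrix (Fin n) (Fin n) ℝ) - A).PosSemidef) (v : EuclideanSpace ℝ (Fin n)) :
    a * ‖v‖ ^ 2 ≤ inner ℝ (Matrix.toEuclideanLin A v) v ∧
    ‖Matrix.toEuclideanLin A v‖ ^ 2 ≤ b ^ 2 * ‖v‖ ^ 2 ∧
    ∀ w, inner ℝ (Matrix.toEuclideanLin A v) w = inner ℝ v (Matrix.toEuclideanLin A w) := by
  have hb : 0 < b := ha.trans_le hab
  have p1 := Matrix.isPositive_toEuclideanLin_iff.mpr h1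
  have p2 := Matrix.isPositive_toEuclideanLin_iff.mpr h2
  have hone : ∀ v, Matrix.toEuclideanLin (1 : Matrix (Fin n) (Fin n) ℝ) v = v := by
    intro v; simp
  have q1 : ∀ v, a * ‖v‖ ^ 2 ≤ inner ℝ (Matrix.toEuclideanLin A v) v := by
    intro v
    have := p1.re_inner_nonneg_left v
    simp only [map_sub, map_smul, LinearMap.sub_apply, LinearMap.smul_apply, hone, inner_sub_left,
      real_inner_smul_left, real_inner_self_eq_norm_sq, RCLike.re_to_real] at this
    linarith
  have q2 : ∀ v, inner ℝ (Matrix.toEuclideanLin A v) v ≤ b * ‖v‖ ^ 2 := by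
    intro v
    have := p2.re_inner_nonneg_left v
    simp only [map_sub, map_smul, LinearMap.sub_apply, LinearMap.smul_apply, hone, inner_sub_left,
      real_inner_smul_left, real_inner_self_eq_norm_sq, RCLike.re_to_real] at this
    linarith
  have q3 : ∀ v w, inner ℝ (Matrix.toEuclideanLin A v) w
      = inner ℝ v (Matrix.toEuclideanLin A w) := by
    intro v w
    have := p1.isSymmetric v w
    simp only [map_sub, map_smul, LinearMap.sub_apply, LinearMap.smul_apply, hone, inner_sub_left,
      inner_sub_right, real_inner_smul_left, real_inner_smul_right] at this
    linarith
  refine ⟨q1 v, ?_, q3 v⟩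
  set T := Matrix.toEuclideanLin A
  have r := q1 (b • v - T v)
  have r0 : 0 ≤ a * ‖b • v - T v‖ ^ 2 := by positivity
  have r1 : inner ℝ (T (b • v - T v)) (b • v - T v)
      = b ^ 2 * inner ℝ (T v) v - 2 * b * ‖T v‖ ^ 2 + inner ℝ (T (T v)) (T v) := by
    simp only [map_sub, map_smul, inner_sub_left,
      inner_sub_right, real_inner_smul_left, real_inner_smul_right, real_inner_self_eq_norm_sq]
    rw [q3 (T v) v, real_inner_self_eq_norm_sq]
    ring
  have r2 := q2 (T v)
  have r3 := q2 v
  have r4 : b * ‖T v‖ ^ 2 ≤ b * (b ^ 2 * ‖v‖ ^ 2) := by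
    nlinarith [mul_le_mul_of_nonneg_left r3 (sq_nonneg b)]
  exact le_of_mul_le_mul_left r4 hb

theorem sqn_descent_lemma
    {n : ℕ} (hn : 1 ≤ n)
    {Ω : Type} {mΩ : MeasurableSpace Ω} (μ : Measure Ω) [IsProbabilityMeasure μ]
    (ℱ : Filtration ℕ mΩ)
    (f : EuclideanSpace ℝ (Fin n) → ℝ) (flow L κlo κhi σ : ℝ)
    (α : ℕ → ℝ) (m : ℕ → ℕ)
    (x : ℕ → Ω → EuclideanSpace ℝ (Fin n))
    (H : ℕ → Ω → Matrix (Fin n) (Fin n) ℝ)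
    (g : ℕ → Ω → EuclideanSpace ℝ (Fin n))
    (x1 : EuclideanSpace ℝ (Fin n))
    -- AS.1
    (hf : ContDiff ℝ 1 f)
    (hflow : ∀ z, flow ≤ f z)
    (hL : 0 < L)
    (hLip : LipschitzWith L.toNNReal (fun z => gradient f z))
    -- constants, stepsizes, batch sizes
    (hκlo : 0 < κlo) (hκ : κlo ≤ κhi) (hσ : 0 < σ)
    (hα : ∀ k, 1 ≤ k → 0 < α k) (hm : ∀ k, 1 ≤ k → 1 ≤ m k)
    -- the SQN iteration
    (hx1 : ∀ ω, x 1 ω = x1)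
    (hxmeas : ∀ k, 1 ≤ k → Measurable[ℱ (k - 1)] (x k))
    (hHsymm : ∀ k, 1 ≤ k → ∀ ω, (H k ω).IsSymm)
    (hHmeas : ∀ k, 1 ≤ k → ∀ i j, Measurable[ℱ (k - 1)] (fun ω => H k ω i j))
    (hgmeas : ∀ k, 1 ≤ k → Measurable[ℱ k] (g k))
    (hiter : ∀ k, 1 ≤ k → ∀ ω,
      x (k + 1) ω = x k ω - α k • (Matrix.toEuclideanLin (H k ω)) (g k ω))
    -- AS.2 : unbiasedness and bounded variance
    (hunbiased : ∀ k, 1 ≤ k →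
      μ[g k | ℱ (k - 1)] =ᵐ[μ] fun ω => gradient f (x k ω))
    (hvar : ∀ k, 1 ≤ k → ∀ᵐ ω ∂μ,
      (μ[fun ω' => ‖g k ω' - gradient f (x k ω')‖ ^ 2 | ℱ (k - 1)]) ω ≤ σ ^ 2 / (m k : ℝ))
    -- AS.3 : eigenvalue bounds on H k
    (hH : ∀ k, 1 ≤ k → ∀ᵐ ω ∂μ,
      (H k ω - κlo • (1 : Matrix (Fin n) (Fin n) ℝ)).PosSemidef ∧
      (κhi • (1 : Matrix (Fin n) (Fin n) ℝ) - H k ω).PosSemidef)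
    -- integrability
    (hint_f : ∀ k, 1 ≤ k → Integrable (fun ω => f (x k ω)) μ)
    (hint_grad : ∀ k, 1 ≤ k → Integrable (fun ω => ‖gradient f (x k ω)‖ ^ 2) μ)
    (hint_g : ∀ k, 1 ≤ k → Integrable (fun ω => ‖g k ω‖ ^ 2) μ)
    -- stepsize condition of the statement
    (hstep : ∀ k, 1 ≤ k → α k ≤ κlo / (L * κhi ^ 2))
    (k : ℕ) (hk : 1 ≤ k) :
    ∀ᵐ ω ∂μ,
      (μ[fun ω' => f (x (k + 1) ω') | ℱ (k - 1)]) ω ≤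
        f (x k ω) - (1 / 2) * α k * κlo * ‖gradient f (x k ω)‖ ^ 2
          + (L * σ ^ 2 * κhi ^ 2 / (2 * (m k : ℝ))) * α k ^ 2 := by
  have hℱ : ℱ (k - 1) ≤ mΩ := ℱ.le _
  have hGc : Continuous (fun z => gradient f z) := hLip.continuous
  have hGm : Measurable[ℱ (k - 1)] (fun ω => gradient f (x k ω)) :=
    hGc.measurable.comp (hxmeas k hk)
  set G : Ω → EuclideanSpace ℝ (Fin n) := fun ω => gradient f (x k ω) with hG
  have hGm' : Measurable G := hGm.mono hℱ le_rfl
  have hgm' : Measurable (g k) := (hgmeas k hk).mono (ℱ.le _) le_rfl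
  have hκhi : 0 < κhi := hκlo.trans_le hκ
  have hαk := hα k hk
  set c : ℝ := L / 2 * α k ^ 2 * κhi ^ 2 with hc
  have hc0 : 0 < c := by positivity
  set V : Ω → EuclideanSpace ℝ (Fin n) := fun ω =>
    (2 * c) • G ω - α k • Matrix.toEuclideanLin (H k ω) (G ω) with hV
  have hHG : Measurable[ℱ (k - 1)] (fun ω => Matrix.toEuclideanLin (H k ω) (G ω)) := by
    have hcoord : ∀ j, Measurable[ℱ (k - 1)] (fun ω => G ω j) := fun j =>
      (EuclideanSpace.proj (𝕜 := ℝ) j).continuous.measurable.comp hGm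
    have : Measurable[ℱ (k - 1)] (fun ω => fun i => ∑ j, H k ω i j * G ω j) := by
      refine @measurable_pi_lambda _ _ _ (ℱ (k - 1)) _ _ fun i => ?_
      exact Finset.measurable_fun_sum _ fun j _ => (hHmeas k hk i j).mul (hcoord j)
    exact (WithLp.measurable_toLp 2 (Fin n → ℝ)).comp this
  have hVm : Measurable[ℱ (k - 1)] V :=
    Measurable.sub (hGm.const_smul (2 * c)) (hHG.const_smul (α k))
  have hVm' : Measurable V := hVm.mono hℱ le_rfl
  have hGL : MemLp G 2 μ :=
    (memLp_two_iff_integrable_sq_norm hGm'.aestronglyMeasurable).2 (hint_grad k hk)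
  have hgL : MemLp (g k) 2 μ :=
    (memLp_two_iff_integrable_sq_norm hgm'.aestronglyMeasurable).2 (hint_g k hk)
  have hHGL : MemLp (fun ω => Matrix.toEuclideanLin (H k ω) (G ω)) 2 μ := by
    refine MemLp.of_le_mul (c := κhi) hGL (hHG.mono hℱ le_rfl).aestronglyMeasurable ?_
    filter_upwards [hH k hk] with ω hω
    have := (sqn_H_bounds _ _ _ hκlo hκ hω.1 hω.2 (G ω)).2.1
    rw [← mul_pow] at this
    exact (pow_le_pow_iff_left₀ (norm_nonneg _) (by positivity) two_ne_zero).1 this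
  have hVL : MemLp V 2 μ := (hGL.const_smul (2 * c)).sub (hHGL.const_smul (α k))
  have hVg : Integrable (fun ω => inner ℝ (V ω) (g k ω)) μ := by
    refine Integrable.mono' ((hVL.integrable_norm_pow two_ne_zero).add (hint_g k hk))
      (hVm'.inner hgm').aestronglyMeasurable (ae_of_all _ fun ω => ?_)
    have := norm_inner_le_norm (𝕜 := ℝ) (V ω) (g k ω)
    simp only [Pi.add_apply]
    nlinarith [sq_nonneg (‖V ω‖ - ‖g k ω‖), sq_nonneg (‖V ω‖), sq_nonneg (‖g k ω‖)]
  have hgi : Integrable (g k) μ := hgL.integrable (by norm_num)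
  have hgGi : Integrable (fun ω => ‖g k ω - G ω‖ ^ 2) μ :=
    (memLp_two_iff_integrable_sq_norm (hgm'.sub hGm').aestronglyMeasurable).1 (hgL.sub hGL)
  set A : Ω → ℝ := fun ω => f (x k ω) - c * ‖G ω‖ ^ 2 with hA
  have hAi : Integrable A μ := (hint_f k hk).sub ((hint_grad k hk).const_mul c)
  have hAm : Measurable[ℱ (k - 1)] A :=
    Measurable.sub (hf.continuous.measurable.comp (hxmeas k hk))
      ((show Continuous fun z : EuclideanSpace ℝ (Fin n) => c * ‖z‖ ^ 2 by
        fun_prop).measurable.comp hGm)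
  have hpull : μ[fun ω => inner ℝ (V ω) (g k ω) | ℱ (k - 1)] =ᵐ[μ]
      fun ω => inner ℝ (V ω) (μ[g k | ℱ (k - 1)] ω) :=
    condExp_bilin_of_stronglyMeasurable_left (innerSL ℝ) hVm.stronglyMeasurable hVg hgi
  have hAe : μ[A | ℱ (k - 1)] = A :=
    condExp_of_stronglyMeasurable hℱ hAm.stronglyMeasurable hAi
  have hpt : (fun ω => f (x (k + 1) ω)) ≤ᵐ[μ]
      (A + fun ω => inner ℝ (V ω) (g k ω)) + c • fun ω => ‖g k ω - G ω‖ ^ 2 := by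
    filter_upwards [hH k hk] with ω hω
    have hd := sqn_descent_ineq f L hL hf hLip (x k ω)
      (-(α k • (Matrix.toEuclideanLin (H k ω)) (g k ω)))
    rw [← sub_eq_add_neg, ← hiter k hk ω, norm_neg, inner_neg_right, norm_smul, mul_pow,
      Real.norm_eq_abs, sq_abs, real_inner_smul_right] at hd
    have hb := (sqn_H_bounds _ _ _ hκlo hκ hω.1 hω.2 (g k ω)).2.1
    have hs := (sqn_H_bounds _ _ _ hκlo hκ hω.1 hω.2 (G ω)).2.2 (g k ω)
    have hn2 := norm_sub_sq_real (g k ω) (G ω)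
    rw [real_inner_comm] at hn2
    simp only [Pi.add_apply, Pi.smul_apply, smul_eq_mul, hA, hV, inner_sub_left,
      real_inner_smul_left, hs, hn2]
    have hb2 := mul_le_mul_of_nonneg_left hb (show 0 ≤ L / 2 * α k ^ 2 by positivity)
    have hGω : gradient f (x k ω) = G ω := rfl
    rw [hGω] at hd
    simp only [hc]
    nlinarith
  have hmono := condExp_mono (m := ℱ (k - 1)) (hint_f (k + 1) (by omega))
    ((hAi.add hVg).add (hgGi.smul c)) hpt
  have e1 := condExp_add (hAi.add hVg) (hgGi.smul c) (ℱ (k - 1))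
  have e2 := condExp_add hAi hVg (ℱ (k - 1))
  have e3 := condExp_smul (μ := μ) c (fun ω => ‖g k ω - G ω‖ ^ 2) (ℱ (k - 1))
  filter_upwards [hmono, e1, e2, e3, hpull, hunbiased k hk, hvar k hk, hH k hk]
    with ω hmono e1 e2 e3 hpull hun hvar hω
  rw [e1, Pi.add_apply, e2, Pi.add_apply, e3, Pi.smul_apply, hpull, hun, hAe, smul_eq_mul] at hmono
  have hlow := (sqn_H_bounds _ _ _ hκlo hκ hω.1 hω.2 (G ω)).1
  have hvar2 := mul_le_mul_of_nonneg_left hvar hc0.le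
  have hGω : gradient f (x k ω) = G ω := rfl
  simp only [hGω, hA, hV, inner_sub_left, real_inner_smul_left,
    real_inner_self_eq_norm_sq] at hmono ⊢
  have hst : α k * (L * κhi ^ 2) ≤ κlo := (le_div_iff₀ (by positivity)).1 (hstep k hk)
  have hc1 : c ≤ 1 / 2 * α k * κlo := by
    simp only [hc]; nlinarith
  have hfin : L * σ ^ 2 * κhi ^ 2 / (2 * (m k : ℝ)) * α k ^ 2 = c * (σ ^ 2 / (m k : ℝ)) := by
    simp only [hc]; ring
  rw [hfin]
  have h7 := mul_le_mul_of_nonneg_left hlow hαk.le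
  have h8 := mul_le_mul_of_nonneg_right hc1 (sq_nonneg ‖G ω‖)
  change _ ≤ _ + c * (μ[fun ω' => ‖g k ω' - gradient f (x k ω')‖ ^ 2 | ℱ (k - 1)]) ω at hmono
  linarith
end

section
/- Let B be a symmetric positive definite n×n real matrix, let s ∈ ℝ^n with s ≠ 0, and let y ∈ ℝ^n. Define the damping parameter θ = 0.75·(sᵀBs)/(sᵀBs − sᵀy) if sᵀy < 0.25·sᵀBs and θ = 1 otherwise, and set ȳ = θ·y + (1−θ)·Bs. Then: (i) sᵀȳ ≥ 0.25·sᵀBs > 0; (ii) the damped BFGS update B⁺ = B + (ȳȳᵀ)/(sᵀȳ) − (Bs)(Bs)ᵀ/(sᵀBs) is symmetric positive definite; and (iii) with ρ = 1/(sᵀȳ) and H = B⁻¹, the matrix H⁺ = (I − ρ·sȳᵀ)·H·(I − ρ·ȳsᵀ) + ρ·ssᵀ is symmetric positive definite. -/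
open Matrix

theorem damped_bfgs_preserves_posdef
    {n : ℕ} (hn : 1 ≤ n)
    (B : Matrix (Fin n) (Fin n) ℝ) (hB : B.PosDef)
    (s y : Fin n → ℝ) (hs : s ≠ 0)
    (θ : ℝ)
    (hθ : θ = if s ⬝ᵥ y < 0.25 * (s ⬝ᵥ B.mulVec s)
        then 0.75 * (s ⬝ᵥ B.mulVec s) / (s ⬝ᵥ B.mulVec s - s ⬝ᵥ y) else 1)
    (ybar : Fin n → ℝ) (hybar : ybar = θ • y + (1 - θ) • B.mulVec s) :
    (0.25 * (s ⬝ᵥ B.mulVec s) ≤ s ⬝ᵥ ybar ∧ 0 < 0.25 * (s ⬝ᵥ B.mulVec s)) ∧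
    (B + (s ⬝ᵥ ybar)⁻¹ • Matrix.vecMulVec ybar ybar
       - (s ⬝ᵥ B.mulVec s)⁻¹ • Matrix.vecMulVec (B.mulVec s) (B.mulVec s)).PosDef ∧
    ((1 - (s ⬝ᵥ ybar)⁻¹ • Matrix.vecMulVec s ybar) * B⁻¹ *
       (1 - (s ⬝ᵥ ybar)⁻¹ • Matrix.vecMulVec ybar s)
       + (s ⬝ᵥ ybar)⁻¹ • Matrix.vecMulVec s s).PosDef := by
  have hsB : 0 < s ⬝ᵥ B.mulVec s := by simpa using hB.dotProduct_mulVec_pos hs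
  have hBt : Bᵀ = B := by simpa [IsHermitian] using hB.1
  have hsym : ∀ u v : Fin n → ℝ, u ⬝ᵥ B.mulVec v = v ⬝ᵥ B.mulVec u := by
    intro u v
    rw [dotProduct_mulVec, ← mulVec_transpose, hBt, dotProduct_comm]
  have h1 : 0.25 * (s ⬝ᵥ B.mulVec s) ≤ s ⬝ᵥ ybar := by
    rw [hybar, dotProduct_add, dotProduct_smul, dotProduct_smul, smul_eq_mul, smul_eq_mul]
    split_ifs at hθ with h
    · have hne : s ⬝ᵥ B.mulVec s - s ⬝ᵥ y ≠ 0 := by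
        have : 0 < s ⬝ᵥ B.mulVec s - s ⬝ᵥ y := by linarith
        exact this.ne'
      have := (eq_div_iff hne).1 hθ
      linarith
    · subst hθ
      linarith
  have h2 : 0 < 0.25 * (s ⬝ᵥ B.mulVec s) := by positivity
  have h3 : 0 < s ⬝ᵥ ybar := lt_of_lt_of_le h2 h1
  clear hybar hθ
  have hvt : ∀ u v : Fin n → ℝ, (vecMulVec u v)ᵀ = vecMulVec v u := by
    intro u v
    ext i j
    simp [vecMulVec_apply, mul_comm]
  refine ⟨⟨h1, h2⟩, ?_, ?_⟩
  · refine PosDef.of_dotProduct_mulVec_pos ?_ ?_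
    · simp [IsHermitian, hvt, hBt]
    · intro x hx
      have key : star x ⬝ᵥ ((B + (s ⬝ᵥ ybar)⁻¹ • Matrix.vecMulVec ybar ybar
         - (s ⬝ᵥ B.mulVec s)⁻¹ • Matrix.vecMulVec (B.mulVec s) (B.mulVec s)) *ᵥ x) =
         (x - ((x ⬝ᵥ B.mulVec s) / (s ⬝ᵥ B.mulVec s)) • s) ⬝ᵥ
          B.mulVec (x - ((x ⬝ᵥ B.mulVec s) / (s ⬝ᵥ B.mulVec s)) • s)
          + (s ⬝ᵥ ybar)⁻¹ * (x ⬝ᵥ ybar) ^ 2 := by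
        simp only [star_trivial, sub_mulVec, add_mulVec, smul_mulVec, vecMulVec_mulVec,
          dotProduct_sub, dotProduct_add, dotProduct_smul, sub_dotProduct, smul_dotProduct,
          mulVec_sub, mulVec_smul, smul_eq_mul, MulOpposite.smul_eq_mul_unop,
          MulOpposite.unop_op, op_smul_eq_smul]
        rw [hsym s x, dotProduct_comm ybar x, dotProduct_comm (B.mulVec s) x]
        field_simp
        ring
      rw [key]
      by_cases hw : x - ((x ⬝ᵥ B.mulVec s) / (s ⬝ᵥ B.mulVec s)) • s = 0
      · have hxy : x ⬝ᵥ ybar ≠ 0 := by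
          intro h0
          have hxs := sub_eq_zero.1 hw
          rw [hxs, smul_dotProduct, smul_eq_mul, mul_eq_zero] at h0
          rcases h0 with h0 | h0
          · rw [h0, zero_smul] at hxs
            exact hx hxs
          · exact h3.ne' h0
        rw [hw, zero_dotProduct, zero_add]
        positivity
      · have := hB.dotProduct_mulVec_pos hw
        rw [star_trivial] at this
        positivity
  · have hH := hB.inv
    have hHt : (B⁻¹)ᵀ = B⁻¹ := by simpa [IsHermitian] using hH.1
    have hct : (1 - (s ⬝ᵥ ybar)⁻¹ • Matrix.vecMulVec s ybar) =
        (1 - (s ⬝ᵥ ybar)⁻¹ • Matrix.vecMulVec ybar s)ᵀ := by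
      simp [hvt]
    refine PosDef.of_dotProduct_mulVec_pos ?_ ?_
    · rw [hct]
      simp [IsHermitian, hvt, hBt, transpose_nonsing_inv, Matrix.mul_assoc]
    · intro x hx
      have hv : (1 - (s ⬝ᵥ ybar)⁻¹ • Matrix.vecMulVec ybar s) *ᵥ x =
          x - ((s ⬝ᵥ ybar)⁻¹ * (s ⬝ᵥ x)) • ybar := by
        simp [sub_mulVec, smul_mulVec, vecMulVec_mulVec, smul_smul]
      have key : star x ⬝ᵥ (((1 - (s ⬝ᵥ ybar)⁻¹ • Matrix.vecMulVec s ybar) * B⁻¹ *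
         (1 - (s ⬝ᵥ ybar)⁻¹ • Matrix.vecMulVec ybar s)
         + (s ⬝ᵥ ybar)⁻¹ • Matrix.vecMulVec s s) *ᵥ x) =
         (x - ((s ⬝ᵥ ybar)⁻¹ * (s ⬝ᵥ x)) • ybar) ⬝ᵥ
          B⁻¹.mulVec (x - ((s ⬝ᵥ ybar)⁻¹ * (s ⬝ᵥ x)) • ybar)
          + (s ⬝ᵥ ybar)⁻¹ * (s ⬝ᵥ x) ^ 2 := by
        rw [hct, star_trivial, add_mulVec, dotProduct_add, ← mulVec_mulVec, ← mulVec_mulVec,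
          dotProduct_mulVec x, vecMul_transpose, hv]
        simp only [smul_mulVec, vecMulVec_mulVec, dotProduct_smul, smul_eq_mul,
          op_smul_eq_smul]
        rw [dotProduct_comm x s]
        ring
      rw [key]
      by_cases hw : x - ((s ⬝ᵥ ybar)⁻¹ * (s ⬝ᵥ x)) • ybar = 0
      · have hxy : s ⬝ᵥ x ≠ 0 := by
          intro h0
          rw [h0] at hw
          simp at hw
          exact hx hw
        rw [hw, zero_dotProduct, zero_add]
        positivity
      · have := hH.dotProduct_mulVec_pos hw
        rw [star_trivial] at this
        positivity
end

section
/- Let κ > 0 and δ > 0, let γ ∈ [δ, κ+δ], let s ∈ ℝ^n with s ≠ 0, and let y ∈ ℝ^n with ‖y‖ ≤ κ‖s‖. Define the damping parameter θ = 0.75·γ·(sᵀs)/(γ·sᵀs − sᵀy) if sᵀy < 0.25·γ·sᵀs and θ = 1 otherwise, and set ȳ = θ·y + (1−θ)·γ·s. Then sᵀȳ ≥ 0.25·γ·sᵀs > 0 and (ȳᵀȳ)/(sᵀȳ) ≤ 4κ²/δ + 4(κ+δ). -/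
open scoped RealInnerProductSpace

theorem damped_ybar_curvature_and_bound
    {n : ℕ} (hn : 1 ≤ n)
    (κ δ γ : ℝ) (hκ : 0 < κ) (hδ : 0 < δ) (hγ : γ ∈ Set.Icc δ (κ + δ))
    (s y : EuclideanSpace ℝ (Fin n)) (hs : s ≠ 0) (hy : ‖y‖ ≤ κ * ‖s‖)
    (θ : ℝ)
    (hθ : θ = if ⟪s, y⟫ < 0.25 * γ * ⟪s, s⟫
        then 0.75 * γ * ⟪s, s⟫ / (γ * ⟪s, s⟫ - ⟪s, y⟫) else 1)
    (ybar : EuclideanSpace ℝ (Fin n)) (hybar : ybar = θ • y + (1 - θ) • γ • s) :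
    (0.25 * γ * ⟪s, s⟫ ≤ ⟪s, ybar⟫ ∧ 0 < 0.25 * γ * ⟪s, s⟫) ∧
    ⟪ybar, ybar⟫ / ⟪s, ybar⟫ ≤ 4 * κ ^ 2 / δ + 4 * (κ + δ) := by
  obtain ⟨h1, h2⟩ := hγ
  have hγ0 : 0 < γ := lt_of_lt_of_le hδ h1
  have ha : 0 < ⟪s, s⟫ := real_inner_self_pos.mpr hs
  have hc : ⟪y, y⟫ ≤ κ ^ 2 * ⟪s, s⟫ := by
    rw [real_inner_self_eq_norm_sq, real_inner_self_eq_norm_sq, ← mul_pow]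
    exact pow_le_pow_left₀ (norm_nonneg _) hy 2
  have hd : 0 ≤ ⟪y - γ • s, y - γ • s⟫ := real_inner_self_nonneg
  have hc0 : 0 ≤ ⟪y, y⟫ := real_inner_self_nonneg
  have e1 : ⟪s, ybar⟫ = θ * ⟪s, y⟫ + (1 - θ) * (γ * ⟪s, s⟫) := by
    rw [hybar]
    simp only [inner_add_right, real_inner_smul_right]
  have e2 : ⟪ybar, ybar⟫ = θ * ⟪y, y⟫ + (1 - θ) * (γ ^ 2 * ⟪s, s⟫)
      - θ * (1 - θ) * ⟪y - γ • s, y - γ • s⟫ := by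
    rw [hybar]
    simp only [inner_add_right, inner_add_left, inner_sub_left, inner_sub_right,
      real_inner_smul_right, real_inner_smul_left, real_inner_comm s y]
    ring
  rw [e1, e2]
  generalize ⟪y - γ • s, y - γ • s⟫ = d at *
  generalize ⟪s, s⟫ = a at *
  generalize ⟪s, y⟫ = b at *
  generalize ⟪y, y⟫ = c at *
  have hga : 0 < γ * a := mul_pos hγ0 ha
  have key : 0 ≤ θ ∧ θ ≤ 1 ∧ 0.25 * γ * a ≤ θ * b + (1 - θ) * (γ * a) := by
    split_ifs at hθ with h
    · have hp : 0 < γ * a - b := by linarith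
      have hm : θ * (γ * a - b) = 0.75 * γ * a := by
        rw [hθ]; field_simp
      refine ⟨?_, ?_, by linarith⟩
      · rw [hθ]; positivity
      · rw [hθ, div_le_one hp]; linarith
    · subst hθ
      refine ⟨by norm_num, le_refl _, by linarith⟩
  obtain ⟨t0, t1, hk⟩ := key
  have hpos : 0 < 0.25 * γ * a := by positivity
  refine ⟨⟨hk, hpos⟩, ?_⟩
  rw [div_le_iff₀ (lt_of_lt_of_le hpos hk)]
  have hR : 0 ≤ 4 * κ ^ 2 / δ + 4 * (κ + δ) := by positivity
  refine le_trans ?_ (mul_le_mul_of_nonneg_left hk hR)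
  have q1 : 0 ≤ θ * (1 - θ) * d := mul_nonneg (mul_nonneg t0 (by linarith)) hd
  have q2 : θ * c ≤ κ ^ 2 * a := by nlinarith
  have q3 : (1 - θ) * (γ ^ 2 * a) ≤ γ ^ 2 * a := by
    nlinarith [mul_nonneg t0 (by positivity : 0 ≤ γ ^ 2 * a)]
  have q4 : κ ^ 2 * a ≤ κ ^ 2 / δ * γ * a := by
    have : κ ^ 2 ≤ κ ^ 2 / δ * γ := by
      rw [div_mul_eq_mul_div, le_div_iff₀ hδ]
      exact mul_le_mul_of_nonneg_left h1 (by positivity)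
    exact mul_le_mul_of_nonneg_right this ha.le
  have q5 : γ ^ 2 * a ≤ (κ + δ) * (γ * a) := by nlinarith
  have q6 : (4 * κ ^ 2 / δ + 4 * (κ + δ)) * (0.25 * γ * a)
      = κ ^ 2 / δ * γ * a + (κ + δ) * (γ * a) := by ring
  linarith
end

section
/- Let B be a symmetric positive definite n×n real matrix and let s ∈ ℝ^n with s ≠ 0. Then the matrix B − (Bs)(Bs)ᵀ/(sᵀBs) is symmetric positive semidefinite and its operator norm satisfies ‖B − (Bs)(Bs)ᵀ/(sᵀBs)‖ ≤ ‖B‖. Consequently, for any ȳ ∈ ℝ^n with sᵀȳ > 0, the BFGS-updated matrix satisfies ‖B + (ȳȳᵀ)/(sᵀȳ) − (Bs)(Bs)ᵀ/(sᵀBs)‖ ≤ ‖B‖ + (ȳᵀȳ)/(sᵀȳ). -/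
open Matrix

/-- The operator (spectral) norm of a real matrix, induced by the Euclidean norm. -/
noncomputable def l2OpNorm {n : ℕ} (A : Matrix (Fin n) (Fin n) ℝ) : ℝ :=
  ‖Matrix.toEuclideanCLM (𝕜 := ℝ) A‖

theorem aux_cs {n : ℕ} (A : Matrix (Fin n) (Fin n) ℝ) (hA : A.PosSemidef) (x y : Fin n → ℝ) :
    (x ⬝ᵥ A.mulVec y) ^ 2 ≤ (x ⬝ᵥ A.mulVec x) * (y ⬝ᵥ A.mulVec y) := by
  have hsym : y ⬝ᵥ A.mulVec x = x ⬝ᵥ A.mulVec y := by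
    have h0 : A.IsSymm := by simpa using hA.1
    have h : Aᵀ = A := h0
    rw [dotProduct_comm, ← vecMul_transpose, h, ← dotProduct_mulVec]
  have key : ∀ t : ℝ, 0 ≤ (y ⬝ᵥ A.mulVec y) * (t * t) + (2 * (x ⬝ᵥ A.mulVec y)) * t
      + (x ⬝ᵥ A.mulVec x) := by
    intro t
    have h := hA.dotProduct_mulVec_nonneg (x + t • y)
    simp only [star_trivial, mulVec_add, mulVec_smul, add_dotProduct, dotProduct_add,
      smul_dotProduct, dotProduct_smul, smul_eq_mul, hsym] at h
    linarith
  have h := discrim_le_zero key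
  unfold discrim at h
  nlinarith

theorem aux_inner {n : ℕ} (x y : Fin n → ℝ) :
    (x ⬝ᵥ y) ^ 2 ≤ (x ⬝ᵥ x) * (y ⬝ᵥ y) := by
  simpa using aux_cs (1 : Matrix (Fin n) (Fin n) ℝ) PosSemidef.one x y

theorem aux_norm_sq {n : ℕ} (x : EuclideanSpace ℝ (Fin n)) : ‖x‖ ^ 2 = x.ofLp ⬝ᵥ x.ofLp := by
  rw [EuclideanSpace.norm_sq_eq]
  simp [dotProduct, sq]

theorem aux_self_nonneg {n : ℕ} (x : Fin n → ℝ) : 0 ≤ x ⬝ᵥ x :=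
  Finset.sum_nonneg fun i _ => mul_self_nonneg (x i)

theorem aux_bound {n : ℕ} (A : Matrix (Fin n) (Fin n) ℝ) (hA : A.PosSemidef) (M : ℝ) (hM : 0 ≤ M)
    (h : ∀ x : Fin n → ℝ, x ⬝ᵥ A.mulVec x ≤ M * (x ⬝ᵥ x)) : l2OpNorm A ≤ M := by
  refine ContinuousLinearMap.opNorm_le_bound _ hM fun x => ?_
  refine abs_le_of_sq_le_sq' ?_ (by positivity) |>.2
  rw [mul_pow, aux_norm_sq, aux_norm_sq, ofLp_toEuclideanCLM]
  generalize x.ofLp = y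
  have h1 := aux_cs A hA (A.mulVec y) y
  have h2 := h (A.mulVec y)
  have h3 := h y
  have p1 : 0 ≤ y ⬝ᵥ A.mulVec y := by simpa using hA.dotProduct_mulVec_nonneg y
  have p3 := aux_self_nonneg y
  have p4 := aux_self_nonneg (A.mulVec y)
  have h5 := mul_le_mul h2 h3 p1 (by positivity)
  rcases p4.eq_or_lt with h6 | h6
  · rw [← h6]; positivity
  · refine le_of_mul_le_mul_left ?_ h6
    nlinarith

theorem aux_quad_le {n : ℕ} (A : Matrix (Fin n) (Fin n) ℝ) (x : Fin n → ℝ) :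
    x ⬝ᵥ A.mulVec x ≤ l2OpNorm A * (x ⬝ᵥ x) := by
  have h1 := real_inner_le_norm (WithLp.toLp 2 x) (toEuclideanCLM (𝕜 := ℝ) A (WithLp.toLp 2 x))
  have h2 := (toEuclideanCLM (𝕜 := ℝ) A).le_opNorm (WithLp.toLp 2 x)
  have h3 := aux_norm_sq (WithLp.toLp 2 x)
  rw [inner_toEuclideanCLM] at h1
  simp only at h1 h3
  rw [← h3]
  unfold l2OpNorm
  have h4 := mul_le_mul_of_nonneg_left h2 (norm_nonneg (WithLp.toLp 2 x))
  have h5 := h1.trans h4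
  have h6 : x ⬝ᵥ A.mulVec x = x ᵥ* A ⬝ᵥ x := dotProduct_mulVec _ _ _
  linarith

theorem aux_rank {n : ℕ} (c : ℝ) (v x : Fin n → ℝ) :
    x ⬝ᵥ (c • Matrix.vecMulVec v v).mulVec x = c * (v ⬝ᵥ x) ^ 2 := by
  rw [smul_mulVec, vecMulVec_mulVec, dotProduct_smul]
  simp [dotProduct_comm x v, sq]

theorem aux_rank_herm {n : ℕ} (c : ℝ) (v : Fin n → ℝ) :
    (c • Matrix.vecMulVec v v).IsHermitian := by
  ext i j
  simp [vecMulVec_apply, mul_comm]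

theorem bfgs_update_norm_bound
    {n : ℕ} (hn : 1 ≤ n)
    (B : Matrix (Fin n) (Fin n) ℝ) (hB : B.PosDef)
    (s : Fin n → ℝ) (hs : s ≠ 0) :
    (B - (s ⬝ᵥ B.mulVec s)⁻¹ • Matrix.vecMulVec (B.mulVec s) (B.mulVec s)).PosSemidef ∧
    l2OpNorm (B - (s ⬝ᵥ B.mulVec s)⁻¹ • Matrix.vecMulVec (B.mulVec s) (B.mulVec s))
      ≤ l2OpNorm B ∧
    ∀ ybar : Fin n → ℝ, 0 < s ⬝ᵥ ybar →
      l2OpNorm (B + (s ⬝ᵥ ybar)⁻¹ • Matrix.vecMulVec ybar ybar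
          - (s ⬝ᵥ B.mulVec s)⁻¹ • Matrix.vecMulVec (B.mulVec s) (B.mulVec s))
        ≤ l2OpNorm B + (ybar ⬝ᵥ ybar) / (s ⬝ᵥ ybar) := by
  have hpos : 0 < s ⬝ᵥ B.mulVec s := by simpa using hB.dotProduct_mulVec_pos hs
  have h1 : (B - (s ⬝ᵥ B.mulVec s)⁻¹ • Matrix.vecMulVec (B.mulVec s) (B.mulVec s)).PosSemidef := by
    refine PosSemidef.of_dotProduct_mulVec_nonneg (hB.1.sub (aux_rank_herm _ _)) fun x => ?_
    rw [star_trivial, sub_mulVec, dotProduct_sub, aux_rank, sub_nonneg, inv_mul_le_iff₀ hpos,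
      dotProduct_comm _ x, mul_comm]
    exact aux_cs B hB.posSemidef x s
  have h2 : l2OpNorm (B - (s ⬝ᵥ B.mulVec s)⁻¹ • Matrix.vecMulVec (B.mulVec s) (B.mulVec s))
      ≤ l2OpNorm B := by
    refine aux_bound _ h1 _ (norm_nonneg _) fun x => ?_
    refine le_trans ?_ (aux_quad_le B x)
    rw [sub_mulVec, dotProduct_sub, aux_rank]
    have : 0 ≤ (s ⬝ᵥ B.mulVec s)⁻¹ * (B.mulVec s ⬝ᵥ x) ^ 2 := by positivity
    linarith
  refine ⟨h1, h2, fun y hy => ?_⟩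
  have h3 : l2OpNorm ((s ⬝ᵥ y)⁻¹ • Matrix.vecMulVec y y) ≤ (y ⬝ᵥ y) / (s ⬝ᵥ y) := by
    refine aux_bound _ ?_ _ (div_nonneg (aux_self_nonneg y) hy.le) fun x => ?_
    · refine PosSemidef.of_dotProduct_mulVec_nonneg (aux_rank_herm _ _) fun x => ?_
      rw [star_trivial, aux_rank]
      positivity
    · rw [aux_rank, div_eq_inv_mul, mul_assoc]
      exact mul_le_mul_of_nonneg_left (aux_inner y x) (by positivity)
  have h4 : l2OpNorm (B + (s ⬝ᵥ y)⁻¹ • Matrix.vecMulVec y y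
          - (s ⬝ᵥ B.mulVec s)⁻¹ • Matrix.vecMulVec (B.mulVec s) (B.mulVec s)) ≤
      l2OpNorm (B - (s ⬝ᵥ B.mulVec s)⁻¹ • Matrix.vecMulVec (B.mulVec s) (B.mulVec s))
      + l2OpNorm ((s ⬝ᵥ y)⁻¹ • Matrix.vecMulVec y y) := by
    rw [add_sub_right_comm]
    unfold l2OpNorm
    rw [map_add]
    exact norm_add_le _ _
  linarith
end

section
/- Let κ > 0, δ > 0, and let p ≥ 1 be an integer. For i = 1,…,p, let s_i ∈ ℝ^n with s_i ≠ 0, y_i ∈ ℝ^n with ‖y_i‖ ≤ κ‖s_i‖, and γ_i ∈ [δ, κ+δ]; define θ_i = 0.75·γ_i·(s_iᵀs_i)/(γ_i·s_iᵀs_i − s_iᵀy_i) if s_iᵀy_i < 0.25·γ_i·s_iᵀs_i and θ_i = 1 otherwise, and ȳ_i = θ_i·y_i + (1−θ_i)·γ_i·s_i. Let γ₀ ∈ [δ, κ+δ], set B₀ = γ₀·I, and for i = 1,…,p set B_i = B_{i−1} + (ȳ_iȳ_iᵀ)/(s_iᵀȳ_i) − (B_{i−1}s_i)(B_{i−1}s_i)ᵀ/(s_iᵀB_{i−1}s_i).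 Then every B_i is symmetric positive definite, and ‖B_p‖ ≤ 4p·κ²/δ + (4p+1)·(κ+δ); equivalently, every eigenvalue of H = B_p^{−1} is at least (4p·κ²/δ + (4p+1)·(κ+δ))^{−1}. -/
open Matrix

/-- The bound on the damped gradient difference. -/
theorem damped_bound {n : ℕ} (κ δ γ θ : ℝ) (hδ : 0 < δ) (s y yb : Fin n → ℝ)
    (hs : s ≠ 0) (hy : Real.sqrt (y ⬝ᵥ y) ≤ κ * Real.sqrt (s ⬝ᵥ s))
    (hγ : γ ∈ Set.Icc δ (κ + δ))
    (hθ : θ = if s ⬝ᵥ y < 0.25 * γ * (s ⬝ᵥ s)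
      then 0.75 * γ * (s ⬝ᵥ s) / (γ * (s ⬝ᵥ s) - s ⬝ᵥ y) else 1)
    (hyb : yb = θ • y + (1 - θ) • γ • s) :
    0 < s ⬝ᵥ yb ∧ yb ⬝ᵥ yb ≤ (4 * κ ^ 2 / δ + 4 * (κ + δ)) * (s ⬝ᵥ yb) := by
  obtain ⟨hγ1, hγ2⟩ := hγ
  have hγpos : 0 < γ := lt_of_lt_of_le hδ hγ1
  have hss : 0 < s ⬝ᵥ s := by
    have h0 : 0 ≤ s ⬝ᵥ s := by simpa using dotProduct_star_self_nonneg s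
    refine lt_of_le_of_ne h0 (fun h => hs (dotProduct_self_eq_zero.1 h.symm))
  have hyy0 : 0 ≤ y ⬝ᵥ y := by simpa using dotProduct_star_self_nonneg y
  have hyy : y ⬝ᵥ y ≤ κ ^ 2 * (s ⬝ᵥ s) := by
    have h := mul_self_le_mul_self (Real.sqrt_nonneg _) hy
    rw [Real.mul_self_sqrt hyy0] at h
    calc y ⬝ᵥ y ≤ _ := h
      _ = κ ^ 2 * (Real.sqrt (s ⬝ᵥ s) * Real.sqrt (s ⬝ᵥ s)) := by ring
      _ = _ := by rw [Real.mul_self_sqrt hss.le]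
  have hdiff : 0 ≤ (y - γ • s) ⬝ᵥ (y - γ • s) := by
    simpa using dotProduct_star_self_nonneg (y - γ • s)
  have hsyb : s ⬝ᵥ yb = θ * (s ⬝ᵥ y) + (1 - θ) * γ * (s ⬝ᵥ s) := by
    rw [hyb]; simp [dotProduct_add, dotProduct_smul]; ring
  have hybyb : yb ⬝ᵥ yb = θ ^ 2 * (y ⬝ᵥ y) + 2 * θ * (1 - θ) * γ * (s ⬝ᵥ y)
      + (1 - θ) ^ 2 * γ ^ 2 * (s ⬝ᵥ s) := by
    rw [hyb]
    simp [dotProduct_add, add_dotProduct, dotProduct_smul, smul_dotProduct, dotProduct_comm y s]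
    ring
  have hdiff2 : 0 ≤ y ⬝ᵥ y - 2 * γ * (s ⬝ᵥ y) + γ ^ 2 * (s ⬝ᵥ s) := by
    have e : (y - γ • s) ⬝ᵥ (y - γ • s)
        = y ⬝ᵥ y - 2 * γ * (s ⬝ᵥ y) + γ ^ 2 * (s ⬝ᵥ s) := by
      simp [dotProduct_sub, sub_dotProduct, dotProduct_smul, smul_dotProduct, dotProduct_comm y s]
      ring
    rwa [← e]
  generalize s ⬝ᵥ yb = c at *
  generalize yb ⬝ᵥ yb = d at *
  generalize s ⬝ᵥ y = a at *
  generalize s ⬝ᵥ s = σ at *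
  generalize y ⬝ᵥ y = b at *
  have key : 0 ≤ θ ∧ θ ≤ 1 ∧ 0.25 * γ * σ ≤ c := by
    split_ifs at hθ with h
    · have hpos : 0 < γ * σ - a := by nlinarith [mul_pos hγpos hss]
      have hm : θ * (γ * σ - a) = 0.75 * γ * σ := by rw [hθ]; field_simp
      refine ⟨?_, ?_, ?_⟩
      · rw [hθ]; positivity
      · rw [hθ, div_le_one hpos]; nlinarith
      · rw [hsyb]; nlinarith
    · subst hθ
      refine ⟨by norm_num, le_rfl, ?_⟩
      rw [hsyb]; linarith
  obtain ⟨h0, h1, hc⟩ := key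
  have hgs := mul_pos hγpos hss
  have hcpos : 0 < c := by nlinarith
  refine ⟨hcpos, ?_⟩
  have hd : d ≤ θ * b + (1 - θ) * (γ ^ 2 * σ) := by
    have := mul_nonneg (mul_nonneg h0 (sub_nonneg.2 h1)) hdiff2
    rw [hybyb]; nlinarith
  have hd2 : d ≤ κ ^ 2 * σ + γ ^ 2 * σ := by
    have e1 := mul_le_mul_of_nonneg_left hyy h0
    have e2 : 0 ≤ κ ^ 2 * σ := by positivity
    have e3 : 0 ≤ γ ^ 2 * σ := by positivity
    nlinarith
  have hK : 0 ≤ 4 * κ ^ 2 / δ + 4 * (κ + δ) := by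
    have : 0 ≤ κ + δ := by linarith
    positivity
  have e5 : κ ^ 2 * σ ≤ (4 * κ ^ 2 / δ) * (0.25 * γ * σ) := by
    have : (4 * κ ^ 2 / δ) * (0.25 * γ * σ) = κ ^ 2 * σ * (γ / δ) := by field_simp; ring
    rw [this]
    exact le_mul_of_one_le_right (by positivity) ((one_le_div hδ).2 hγ1)
  have e6 : γ ^ 2 * σ ≤ (4 * (κ + δ)) * (0.25 * γ * σ) := by
    nlinarith [mul_le_mul_of_nonneg_right hγ2 hgs.le]
  calc d ≤ _ := hd2
    _ ≤ (4 * κ ^ 2 / δ + 4 * (κ + δ)) * (0.25 * γ * σ) := by linarith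
    _ ≤ _ := mul_le_mul_of_nonneg_left hc hK

theorem dot_cs {n : ℕ} (u v : Fin n → ℝ) : (u ⬝ᵥ v) ^ 2 ≤ (u ⬝ᵥ u) * (v ⬝ᵥ v) := by
  have := Finset.sum_mul_sq_le_sq_mul_sq Finset.univ u v
  simpa [dotProduct, sq] using this

theorem symm_dot {n : ℕ} {A : Matrix (Fin n) (Fin n) ℝ} (hA : A.PosDef) (u v : Fin n → ℝ) :
    u ⬝ᵥ A *ᵥ v = v ⬝ᵥ A *ᵥ u := by
  have hT : Aᵀ = A := by
    have h := hA.1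
    rwa [Matrix.IsHermitian, conjTranspose_eq_transpose_of_trivial] at h
  rw [dotProduct_mulVec, ← mulVec_transpose, hT, dotProduct_comm]

theorem posdef_dot {n : ℕ} {A : Matrix (Fin n) (Fin n) ℝ} (hA : A.PosDef) {x : Fin n → ℝ}
    (hx : x ≠ 0) : 0 < x ⬝ᵥ A *ᵥ x := by
  simpa using hA.dotProduct_mulVec_pos hx

theorem posdef_dot_nonneg {n : ℕ} {A : Matrix (Fin n) (Fin n) ℝ} (hA : A.PosDef) (x : Fin n → ℝ) :
    0 ≤ x ⬝ᵥ A *ᵥ x := by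
  simpa using hA.posSemidef.dotProduct_mulVec_nonneg x

/-- One BFGS update. -/
theorem bfgs_step {n : ℕ} (A A' : Matrix (Fin n) (Fin n) ℝ) (s y : Fin n → ℝ) (M C : ℝ)
    (hA : A.PosDef) (hM : ∀ x, x ⬝ᵥ A *ᵥ x ≤ M * (x ⬝ᵥ x)) (hs : s ≠ 0)
    (hsy : 0 < s ⬝ᵥ y) (hC : y ⬝ᵥ y ≤ C * (s ⬝ᵥ y))
    (hA' : A' = A + (s ⬝ᵥ y)⁻¹ • vecMulVec y y
      - (s ⬝ᵥ A *ᵥ s)⁻¹ • vecMulVec (A *ᵥ s) (A *ᵥ s)) :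
    A'.PosDef ∧ ∀ x, x ⬝ᵥ A' *ᵥ x ≤ (M + C) * (x ⬝ᵥ x) := by
  have hsAs := posdef_dot hA hs
  have hq : ∀ x, x ⬝ᵥ A' *ᵥ x = x ⬝ᵥ A *ᵥ x + (s ⬝ᵥ y)⁻¹ * (x ⬝ᵥ y) ^ 2
      - (s ⬝ᵥ A *ᵥ s)⁻¹ * (x ⬝ᵥ A *ᵥ s) ^ 2 := by
    intro x
    rw [hA']
    simp only [sub_mulVec, add_mulVec, smul_mulVec, vecMulVec_mulVec, dotProduct_sub,
      dotProduct_add, dotProduct_smul, smul_eq_mul, op_smul_eq_smul, dotProduct_comm y x,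
      dotProduct_comm (A *ᵥ s) x]
    ring
  have hT : Aᵀ = A := by
    have h := hA.1
    rwa [Matrix.IsHermitian, conjTranspose_eq_transpose_of_trivial] at h
  constructor
  · refine Matrix.PosDef.of_dotProduct_mulVec_pos ?_ ?_
    · have : A'ᵀ = A' := by
        rw [hA']; simp [transpose_add, transpose_sub, transpose_smul, transpose_vecMulVec, hT]
      rwa [Matrix.IsHermitian, conjTranspose_eq_transpose_of_trivial]
    · intro x hx
      have goal : 0 < x ⬝ᵥ A' *ᵥ x := by
        rw [hq]
        set t := (s ⬝ᵥ A *ᵥ s)⁻¹ * (x ⬝ᵥ A *ᵥ s) with ht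
        have hz : (x - t • s) ⬝ᵥ A *ᵥ (x - t • s)
            = x ⬝ᵥ A *ᵥ x - (s ⬝ᵥ A *ᵥ s)⁻¹ * (x ⬝ᵥ A *ᵥ s) ^ 2 := by
          simp only [mulVec_sub, mulVec_smul, dotProduct_sub, sub_dotProduct, dotProduct_smul,
            smul_dotProduct, smul_eq_mul, symm_dot hA s x]
          rw [ht]; field_simp; ring
        have hinv : 0 < (s ⬝ᵥ y)⁻¹ := inv_pos.2 hsy
        by_cases h : x - t • s = 0
        · have hx' : x = t • s := sub_eq_zero.1 h
          have ht0 : t ≠ 0 := by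
            intro h0; apply hx; rw [hx', h0, zero_smul]
          have hxy : x ⬝ᵥ y = t * (s ⬝ᵥ y) := by
            conv_lhs => rw [hx']
            simp
          have h1 := posdef_dot_nonneg hA (x - t • s)
          rw [hz] at h1
          have h2 : 0 < (s ⬝ᵥ y)⁻¹ * (x ⬝ᵥ y) ^ 2 := by
            rw [hxy]; positivity
          linarith
        · have h1 := posdef_dot hA h
          rw [hz] at h1
          have h2 : 0 ≤ (s ⬝ᵥ y)⁻¹ * (x ⬝ᵥ y) ^ 2 := by positivity
          linarith
      simpa using goal
  · intro x
    rw [hq]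
    have h1 := hM x
    have h2 : 0 ≤ (s ⬝ᵥ A *ᵥ s)⁻¹ * (x ⬝ᵥ A *ᵥ s) ^ 2 := by positivity
    have hxx : 0 ≤ x ⬝ᵥ x := by simpa using dotProduct_star_self_nonneg x
    have h3 : (s ⬝ᵥ y)⁻¹ * (x ⬝ᵥ y) ^ 2 ≤ C * (x ⬝ᵥ x) := by
      rw [inv_mul_le_iff₀ hsy]
      have := mul_le_mul_of_nonneg_left hC hxx
      nlinarith [dot_cs x y]
    linarith

theorem posdef_norm_le {n : ℕ} {A : Matrix (Fin n) (Fin n) ℝ} {M : ℝ} (hM0 : 0 < M)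
    (hA : A.PosDef) (hM : ∀ x, x ⬝ᵥ A *ᵥ x ≤ M * (x ⬝ᵥ x)) : l2OpNorm A ≤ M := by
  unfold l2OpNorm
  refine ContinuousLinearMap.opNorm_le_bound _ hM0.le ?_
  intro x
  have hnorm : ∀ v : EuclideanSpace ℝ (Fin n), ‖v‖ ^ 2 = v.ofLp ⬝ᵥ v.ofLp := by
    intro v
    rw [EuclideanSpace.norm_sq_eq]
    simp [dotProduct, sq]
  refine (pow_le_pow_iff_left₀ (norm_nonneg _) (by positivity) two_ne_zero).1 ?_
  rw [mul_pow, hnorm, hnorm]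
  have hof : (Matrix.toEuclideanCLM (𝕜 := ℝ) A x).ofLp = A *ᵥ x.ofLp := by
    simp
  rw [hof]
  generalize x.ofLp = x
  have h1 := posdef_dot_nonneg hA (M • x - A *ᵥ x)
  have h2 := hM (A *ᵥ x)
  have h3 := hM x
  simp only [mulVec_sub, mulVec_smul, dotProduct_sub, sub_dotProduct, dotProduct_smul,
    smul_dotProduct, smul_eq_mul] at h1
  rw [symm_dot hA x (A *ᵥ x)] at h1
  have h4 : M * ((A *ᵥ x) ⬝ᵥ (A *ᵥ x)) ≤ M * (M * (x ⬝ᵥ A *ᵥ x)) := by nlinarith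
  have h5 := le_of_mul_le_mul_left h4 hM0
  nlinarith

theorem posdef_inv_spec {n : ℕ} {A : Matrix (Fin n) (Fin n) ℝ} {M : ℝ} (hM0 : 0 < M)
    (hA : A.PosDef) (hM : ∀ x, x ⬝ᵥ A *ᵥ x ≤ M * (x ⬝ᵥ x)) (t : ℝ)
    (ht : t ∈ spectrum ℝ A⁻¹) : M⁻¹ ≤ t := by
  rw [← Matrix.spectrum_toLin', ← Module.End.hasEigenvalue_iff_mem_spectrum] at ht
  obtain ⟨v, hv⟩ := ht.exists_hasEigenvector
  have hv0 := hv.2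
  have hv1 : A⁻¹ *ᵥ v = t • v := by simpa using hv.apply_eq_smul
  have hunit : IsUnit A.det := (Matrix.isUnit_iff_isUnit_det A).1 hA.isUnit
  have hv2 : v = t • A *ᵥ v := by
    rw [← mulVec_smul, ← hv1, mulVec_mulVec, mul_nonsing_inv _ hunit, one_mulVec]
  have hvv : v ⬝ᵥ v = t * (v ⬝ᵥ A *ᵥ v) := by
    have := congrArg (fun w => v ⬝ᵥ w) hv2
    simpa using this
  have hpos := posdef_dot hA hv0
  have hb := hM v
  have hvp : 0 < v ⬝ᵥ v := by
    by_contra hc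
    nlinarith
  have htp : 0 < t := by
    by_contra hc
    nlinarith
  rw [inv_le_iff_one_le_mul₀ hM0]
  have : v ⬝ᵥ v * 1 ≤ v ⬝ᵥ v * (t * M) := by nlinarith
  exact le_of_mul_le_mul_left this hvp

theorem sdlbfgs_B_posdef_and_norm_bound
    {n : ℕ} (hn : 1 ≤ n)
    (κ δ : ℝ) (hκ : 0 < κ) (hδ : 0 < δ)
    (p : ℕ) (hp : 1 ≤ p)
    (s y ybar : ℕ → Fin n → ℝ) (γ θ : ℕ → ℝ) (γ0 : ℝ)
    (B : ℕ → Matrix (Fin n) (Fin n) ℝ)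
    (hs : ∀ i, 1 ≤ i → i ≤ p → s i ≠ 0)
    (hy : ∀ i, 1 ≤ i → i ≤ p →
      Real.sqrt (y i ⬝ᵥ y i) ≤ κ * Real.sqrt (s i ⬝ᵥ s i))
    (hγ : ∀ i, 1 ≤ i → i ≤ p → γ i ∈ Set.Icc δ (κ + δ))
    (hθ : ∀ i, 1 ≤ i → i ≤ p → θ i =
      if s i ⬝ᵥ y i < 0.25 * γ i * (s i ⬝ᵥ s i)
      then 0.75 * γ i * (s i ⬝ᵥ s i) / (γ i * (s i ⬝ᵥ s i) - s i ⬝ᵥ y i) else 1)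
    (hybar : ∀ i, 1 ≤ i → i ≤ p →
      ybar i = θ i • y i + (1 - θ i) • γ i • s i)
    (hγ0 : γ0 ∈ Set.Icc δ (κ + δ))
    (hB0 : B 0 = γ0 • (1 : Matrix (Fin n) (Fin n) ℝ))
    (hBrec : ∀ i, 1 ≤ i → i ≤ p → B i = B (i - 1)
      + (s i ⬝ᵥ ybar i)⁻¹ • Matrix.vecMulVec (ybar i) (ybar i)
      - (s i ⬝ᵥ (B (i - 1)).mulVec (s i))⁻¹ •
          Matrix.vecMulVec ((B (i - 1)).mulVec (s i)) ((B (i - 1)).mulVec (s i))) :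
    (∀ i, i ≤ p → (B i).PosDef) ∧
    l2OpNorm (B p) ≤ 4 * p * κ ^ 2 / δ + (4 * p + 1) * (κ + δ) ∧
    ∀ t : ℝ, t ∈ spectrum ℝ (B p)⁻¹ →
      (4 * p * κ ^ 2 / δ + (4 * p + 1) * (κ + δ))⁻¹ ≤ t := by
  have hκδ : 0 < κ + δ := by linarith
  have main : ∀ i, i ≤ p → (B i).PosDef ∧ ∀ x, x ⬝ᵥ (B i) *ᵥ x ≤
      ((κ + δ) + i * (4 * κ ^ 2 / δ + 4 * (κ + δ))) * (x ⬝ᵥ x) := by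
    intro i
    induction i with
    | zero =>
      intro _
      have hγp : 0 < γ0 := lt_of_lt_of_le hδ hγ0.1
      rw [hB0]
      refine ⟨Matrix.PosDef.one.smul hγp, ?_⟩
      intro x
      have hxx : 0 ≤ x ⬝ᵥ x := by simpa using dotProduct_star_self_nonneg x
      have := mul_le_mul_of_nonneg_right hγ0.2 hxx
      simpa [smul_mulVec] using this
    | succ k ih =>
      intro hk
      obtain ⟨hpd, hb⟩ := ih (by omega)
      have h1 : 1 ≤ k + 1 := by omega
      obtain ⟨hc, hd⟩ := damped_bound κ δ (γ (k + 1)) (θ (k + 1)) hδ (s (k + 1)) (y (k + 1))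
        (ybar (k + 1)) (hs _ h1 hk) (hy _ h1 hk) (hγ _ h1 hk) (hθ _ h1 hk) (hybar _ h1 hk)
      have hr := hBrec _ h1 hk
      rw [Nat.add_sub_cancel] at hr
      obtain ⟨r1, r2⟩ := bfgs_step (B k) (B (k + 1)) _ _ _ _ hpd hb (hs _ h1 hk) hc hd hr
      refine ⟨r1, fun x => (r2 x).trans_eq ?_⟩
      push_cast
      ring
  obtain ⟨hpd, hb⟩ := main p le_rfl
  have hM0 : 0 < 4 * p * κ ^ 2 / δ + (4 * p + 1) * (κ + δ) := by positivity
  have hb' : ∀ x, x ⬝ᵥ (B p) *ᵥ x ≤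
      (4 * p * κ ^ 2 / δ + (4 * p + 1) * (κ + δ)) * (x ⬝ᵥ x) := by
    intro x
    refine (hb x).trans_eq ?_
    ring
  exact ⟨fun i hi => (main i hi).1, posdef_norm_le hM0 hpd hb', posdef_inv_spec hM0 hpd hb'⟩
end

section
/- Let κ > 0 and δ > 0, let H be a symmetric positive semidefinite n×n real matrix, and let s, ȳ ∈ ℝ^n with s ≠ 0 satisfy sᵀȳ ≥ 0.25·δ·(sᵀs) and (ȳᵀȳ)/(sᵀȳ) ≤ (4/δ)·(κ+δ)². Set ρ = 1/(sᵀȳ) and H⁺ = (I − ρ·sȳᵀ)·H·(I − ρ·ȳsᵀ) + ρ·ssᵀ. Then ‖H⁺‖ ≤ ((4κ+5δ)/δ)²·‖H‖ + 4/δ. -/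
open Matrix

theorem aux_norm_toLp {n : ℕ} (u : Fin n → ℝ) :
    ‖(WithLp.toLp 2 u : EuclideanSpace ℝ (Fin n))‖ = Real.sqrt (u ⬝ᵥ u) := by
  rw [EuclideanSpace.norm_eq]
  congr 1
  simp [dotProduct, sq]

theorem aux_dot {n : ℕ} (u v : Fin n → ℝ) :
    |u ⬝ᵥ v| ≤ Real.sqrt (u ⬝ᵥ u) * Real.sqrt (v ⬝ᵥ v) := by
  have h := abs_real_inner_le_norm (WithLp.toLp 2 v : EuclideanSpace ℝ (Fin n)) (WithLp.toLp 2 u)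
  rw [aux_norm_toLp, aux_norm_toLp, EuclideanSpace.inner_eq_star_dotProduct] at h
  simpa [mul_comm] using h

theorem aux_vecMulVec {n : ℕ} (u v : Fin n → ℝ) :
    l2OpNorm (Matrix.vecMulVec u v) ≤ Real.sqrt (u ⬝ᵥ u) * Real.sqrt (v ⬝ᵥ v) := by
  unfold l2OpNorm
  refine ContinuousLinearMap.opNorm_le_bound _ (by positivity) fun x => ?_
  obtain ⟨x⟩ := x
  have e : Matrix.toEuclideanCLM (𝕜 := ℝ) (Matrix.vecMulVec u v) (WithLp.toLp 2 x)
      = (v ⬝ᵥ x) • (WithLp.toLp 2 u : EuclideanSpace ℝ (Fin n)) := by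
    rw [Matrix.toEuclideanCLM_toLp]
    ext i
    simp [Matrix.vecMulVec_mulVec, mul_comm]
  rw [e, norm_smul, aux_norm_toLp, aux_norm_toLp, Real.norm_eq_abs]
  have := mul_le_mul_of_nonneg_right (aux_dot v x) (Real.sqrt_nonneg (u ⬝ᵥ u))
  linarith

theorem aux_add {n : ℕ} (A B : Matrix (Fin n) (Fin n) ℝ) :
    l2OpNorm (A + B) ≤ l2OpNorm A + l2OpNorm B := by
  unfold l2OpNorm; rw [map_add]; exact norm_add_le _ _

theorem aux_sub {n : ℕ} (A B : Matrix (Fin n) (Fin n) ℝ) :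
    l2OpNorm (A - B) ≤ l2OpNorm A + l2OpNorm B := by
  unfold l2OpNorm; rw [map_sub]; exact norm_sub_le _ _

theorem aux_mul {n : ℕ} (A B : Matrix (Fin n) (Fin n) ℝ) :
    l2OpNorm (A * B) ≤ l2OpNorm A * l2OpNorm B := by
  unfold l2OpNorm; rw [map_mul]; exact norm_mul_le _ _

theorem aux_smul {n : ℕ} (c : ℝ) (hc : 0 ≤ c) (A : Matrix (Fin n) (Fin n) ℝ) :
    l2OpNorm (c • A) = c * l2OpNorm A := by
  unfold l2OpNorm; rw [map_smul, norm_smul, Real.norm_of_nonneg hc]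

theorem aux_one {n : ℕ} : l2OpNorm (1 : Matrix (Fin n) (Fin n) ℝ) ≤ 1 := by
  unfold l2OpNorm; rw [map_one]; exact ContinuousLinearMap.norm_id_le

theorem aux_nonneg {n : ℕ} (A : Matrix (Fin n) (Fin n) ℝ) : 0 ≤ l2OpNorm A := norm_nonneg _

theorem damped_lbfgs_H_onestep_norm_bound
    {n : ℕ} (hn : 1 ≤ n)
    (κ δ : ℝ) (hκ : 0 < κ) (hδ : 0 < δ)
    (H : Matrix (Fin n) (Fin n) ℝ) (hH : H.PosSemidef)
    (s ybar : Fin n → ℝ) (hs : s ≠ 0)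
    (h1 : 0.25 * δ * (s ⬝ᵥ s) ≤ s ⬝ᵥ ybar)
    (h2 : (ybar ⬝ᵥ ybar) / (s ⬝ᵥ ybar) ≤ (4 / δ) * (κ + δ) ^ 2) :
    l2OpNorm ((1 - (s ⬝ᵥ ybar)⁻¹ • Matrix.vecMulVec s ybar) * H *
        (1 - (s ⬝ᵥ ybar)⁻¹ • Matrix.vecMulVec ybar s)
      + (s ⬝ᵥ ybar)⁻¹ • Matrix.vecMulVec s s)
      ≤ ((4 * κ + 5 * δ) / δ) ^ 2 * l2OpNorm H + 4 / δ := by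
  have hss : 0 < s ⬝ᵥ s := by
    have h0 : 0 ≤ s ⬝ᵥ s := Finset.sum_nonneg fun i _ => mul_self_nonneg _
    exact lt_of_le_of_ne h0 fun h => hs (dotProduct_self_eq_zero.1 h.symm)
  have hyy : 0 ≤ ybar ⬝ᵥ ybar := Finset.sum_nonneg fun i _ => mul_self_nonneg _
  have hsy : 0 < s ⬝ᵥ ybar := lt_of_lt_of_le (by positivity) h1
  have Bss := aux_vecMulVec s s
  have Bsy := aux_vecMulVec s ybar
  have Bys := aux_vecMulVec ybar s
  rw [mul_comm] at Bys
  rw [Real.mul_self_sqrt hss.le] at Bss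
  rw [← Real.sqrt_mul hss.le] at Bsy Bys
  generalize s ⬝ᵥ s = a at *
  generalize ybar ⬝ᵥ ybar = b at *
  generalize s ⬝ᵥ ybar = c at *
  have hc : 0 ≤ c⁻¹ := by positivity
  have hA : a ≤ 4 / δ * c := by
    rw [div_mul_eq_mul_div, le_div_iff₀ hδ]; linarith
  have hB : b ≤ (4 / δ) * (κ + δ) ^ 2 * c := (div_le_iff₀ hsy).1 h2
  have hR : Real.sqrt (a * b) ≤ 4 / δ * (κ + δ) * c := by
    apply Real.sqrt_le_iff.2 ⟨by positivity, ?_⟩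
    calc a * b ≤ (4 / δ * c) * ((4 / δ) * (κ + δ) ^ 2 * c) :=
          mul_le_mul hA hB hyy (by positivity)
      _ = _ := by ring
  have key : ∀ M : Matrix (Fin n) (Fin n) ℝ, l2OpNorm M ≤ Real.sqrt (a * b) →
      l2OpNorm (1 - c⁻¹ • M) ≤ (4 * κ + 5 * δ) / δ := by
    intro M hM
    have h3 := aux_sub 1 (c⁻¹ • M)
    rw [aux_smul _ hc] at h3
    have h4 : c⁻¹ * l2OpNorm M ≤ 4 / δ * (κ + δ) := by
      rw [inv_mul_le_iff₀ hsy]; linarith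
    have h5 : 1 + 4 / δ * (κ + δ) = (4 * κ + 5 * δ) / δ := by field_simp; ring
    have := aux_one (n := n)
    linarith
  have k1 := key _ Bsy
  have k2 := key _ Bys
  have k3 : l2OpNorm (c⁻¹ • Matrix.vecMulVec s s) ≤ 4 / δ := by
    rw [aux_smul _ hc, inv_mul_le_iff₀ hsy]; linarith
  refine (aux_add _ _).trans (add_le_add ?_ k3)
  have hq : 0 ≤ (4 * κ + 5 * δ) / δ := by positivity
  calc _ ≤ _ := aux_mul _ _
    _ ≤ ((4 * κ + 5 * δ) / δ * l2OpNorm H) * ((4 * κ + 5 * δ) / δ) := by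
        refine mul_le_mul ((aux_mul _ _).trans ?_) k2 (aux_nonneg _)
          (mul_nonneg hq (aux_nonneg _))
        exact mul_le_mul_of_nonneg_right k1 (aux_nonneg _)
    _ = _ := by ring
end
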